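/- Let α, β > −1, n ≥ 1, let u : ℝ → ℝ be differentiable, and let x_0,…,x_n be distinct points such that u(x_0),…,u(x_{n−1}) are the n distinct roots of the Jacobi polynomial G = P_n^{α,β+1}, u(x_n) = 1, u(x_0),…,u(x_n) are pairwise distinct, and u'(x_i) ≠ 0 for all i. Let L_j be the generalized Lagrange functions on these nodes and D the matrix with entries d_{kj} = L_j'(x_k). Then for every j with 0 ≤ j ≤ n−1, the entry in the last row satisfies d_{nj} = 2 u'(x_n) Γ(α+n+1) / ( Γ(α+1) · n! · (α+β+n+2) · P_{n−1}^{α+1,β+2}(u(x_j)) · (u(x_n) − u(x_j)) · (u(x_j) − u(x_n)) ). -/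

import Mathlib

/-- Jacobi polynomials `P_n^{α,β}` defined by the three-term recurrence. -/
noncomputable def jacobiP (α β : ℝ) : ℕ → ℝ → ℝ
  | 0, _ => 1
  | 1, x => (α + β + 2) * x / 2 + (α - β) / 2
  | K + 2, x =>
      ((2 * ((K : ℝ) + 1) + α + β + 1) * (2 * ((K : ℝ) + 1) + α + β + 2) /
            (2 * (((K : ℝ) + 1) + 1) * (((K : ℝ) + 1) + α + β + 1)) * x -
          (β ^ 2 - α ^ 2) * (2 * ((K : ℝ) + 1) + α + β + 1) /
            (2 * (((K : ℝ) + 1) + 1) * (((K : ℝ) + 1) + α + β + 1) *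
              (2 * ((K : ℝ) + 1) + α + β))) *
        jacobiP α β (K + 1) x -
      (((K : ℝ) + 1) + α) * (((K : ℝ) + 1) + β) * (2 * ((K : ℝ) + 1) + α + β + 2) /
            ((((K : ℝ) + 1) + 1) * (((K : ℝ) + 1) + α + β + 1) * (2 * ((K : ℝ) + 1) + α + β)) *
        jacobiP α β K x

open Finset

/-- `glW u x t = ∏ i, (u t − u (x i))`. -/
noncomputable def glW (u : ℝ → ℝ) {n : ℕ} (x : Fin (n + 1) → ℝ) : ℝ → ℝ :=
  fun t => ∏ i, (u t - u (x i))

/-- Generalized Lagrange function `L_j(t) = κ_j ∏_{i ≠ j} (u t − u (x i))`,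
with `κ_j = u'(x_j) / w'(x_j)`. -/
noncomputable def glL (u : ℝ → ℝ) {n : ℕ} (x : Fin (n + 1) → ℝ) (j : Fin (n + 1)) : ℝ → ℝ :=
  fun t => (deriv u (x j) / deriv (glW u x) (x j)) *
    ∏ i ∈ Finset.univ.erase j, (u t - u (x i))

open Polynomial

/-!
Up to the factor `u'(x_k)`, the number `L_j'(x_k)` is the derivative at `u(x_k)` of the classical
Lagrange basis polynomial `ℓ_j` on the nodes `u(x_i)`, and these derivatives satisfy the duality
`ℓ_j'(v_k) ℓ_k'(v_j) = 1 / ((v_k - v_j) (v_j - v_k))`. As `G` has degree at most `n` and vanishes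
at all nodes but `v_n = 1`, it equals `G(1) ℓ_n`; hence `ℓ_n'(v_j) = G'(v_j) / G(1)`, and duality
gives `ℓ_j'(v_n)`. The values `G(1)` and `G'(v_j)` are read off the expansion of the Jacobi
polynomial in powers of `(y - 1) / 2`, which is obtained from the three-term recurrence by
comparing coefficients.
-/

section AscPochhammer

lemma ascPochhammer_succ_eval_left {S : Type*} [CommSemiring S] (n : ℕ) (a : S) :
    (ascPochhammer S (n + 1)).eval a = a * (ascPochhammer S n).eval (a + 1) := by
  simp [ascPochhammer_succ_left, eval_comp]

lemma mul_ascPochhammer_succ_eval_add_one {S : Type*} [CommSemiring S] (n : ℕ) (a : S) :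
    a * (ascPochhammer S (n + 1)).eval (a + 1) =
      (ascPochhammer S n).eval a * (a + n) * (a + n + 1) := by
  rw [← ascPochhammer_succ_eval_left, ascPochhammer_succ_eval, ascPochhammer_succ_eval,
    Nat.cast_succ, add_assoc a]

lemma ne_neg_natCast_of_pos {a : ℝ} (ha : 0 < a) (m : ℕ) : a ≠ -m :=
  ((neg_nonpos.mpr m.cast_nonneg).trans_lt ha).ne'

lemma Gamma_add_natCast_eq_ascPochhammer_mul {a : ℝ} (ha : ∀ m : ℕ, a ≠ -m) (n : ℕ) :
    Real.Gamma (a + n) = (ascPochhammer ℝ n).eval a * Real.Gamma a := by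
  induction n with
  | zero => simp
  | succ n ih =>
    have hn : a + n ≠ 0 := fun h => ha n (eq_neg_of_add_eq_zero_left h)
    rw [Nat.cast_succ, ← add_assoc, Real.Gamma_add_one hn, ih, ascPochhammer_succ_eval]
    ring

end AscPochhammer

section JacobiCoeff

variable {K : Type*} [Field K]

/-- The coefficient of `((y - 1) / 2) ^ k` in the Jacobi polynomial `P_n^{α,β}(y)`. In this form it
is a polynomial in `α` and `β`, and the binomial coefficient makes it vanish for `k > n`, where
`n - k` is truncated. -/
noncomputable def jacobiCoeff (α β : K) (n k : ℕ) : K :=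
  n.choose k * (ascPochhammer K (n - k)).eval (α + k + 1) *
    (ascPochhammer K k).eval (n + α + β + 1) / n.factorial

variable (α β : K)

lemma jacobiCoeff_of_lt {n k : ℕ} (h : n < k) : jacobiCoeff α β n k = 0 := by
  simp [jacobiCoeff, Nat.choose_eq_zero_of_lt h]

variable [CharZero K]

lemma jacobiCoeff_add (k i : ℕ) :
    jacobiCoeff α β (k + i) k = (ascPochhammer K i).eval (α + k + 1) *
      (ascPochhammer K k).eval (k + i + α + β + 1) / (k.factorial * i.factorial) := by
  have hfac : ((k + i).factorial : K) ≠ 0 := Nat.cast_ne_zero.mpr (Nat.factorial_ne_zero _)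
  rw [jacobiCoeff, Nat.cast_add_choose, Nat.add_sub_cancel_left]
  push_cast
  field_simp

lemma jacobiCoeff_succ_succ_mul (n k : ℕ) :
    jacobiCoeff α β (n + 1) (k + 1) * (k + 1) =
      (n + α + β + 2) * jacobiCoeff (α + 1) (β + 1) n k := by
  have hfac : (n.factorial : K) ≠ 0 := Nat.cast_ne_zero.mpr (Nat.factorial_ne_zero n)
  have hchoose : ((n + 1).choose (k + 1) : K) * (k + 1) = (n + 1) * n.choose k := by
    exact_mod_cast (Nat.add_one_mul_choose_eq n k).symm
  simp only [jacobiCoeff, Nat.add_sub_add_right, ascPochhammer_succ_eval_left,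
    Nat.factorial_succ, Nat.cast_mul, Nat.cast_succ]
  rw [show α + (k + 1) + 1 = α + 1 + k + 1 by ring,
    show n + 1 + α + β + 1 = n + α + β + 2 by ring,
    show n + α + β + 2 + 1 = n + (α + 1) + (β + 1) + 1 by ring]
  field_simp
  linear_combination (ascPochhammer K (n - k)).eval (α + 1 + k + 1) *
    (ascPochhammer K k).eval (n + (α + 1) + (β + 1) + 1) * (n + α + β + 2) * hchoose

lemma jacobiCoeff_zero_recurrence (n : ℕ) :
    2 * (n + 2) * (n + α + β + 2) * (2 * n + α + β + 2) * jacobiCoeff α β (n + 2) 0 =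
      (2 * n + α + β + 3) * ((2 * n + α + β + 4) * (2 * n + α + β + 2) - (β ^ 2 - α ^ 2)) *
        jacobiCoeff α β (n + 1) 0 -
      2 * (n + 1 + α) * (n + 1 + β) * (2 * n + α + β + 4) * jacobiCoeff α β n 0 := by
  have hn : (n + 2 : K) ≠ 0 := by exact_mod_cast Nat.succ_ne_zero (n + 1)
  simp only [jacobiCoeff, Nat.sub_zero, ascPochhammer_succ_eval, Nat.factorial_succ,
    Nat.choose_zero_right, ascPochhammer_zero, eval_one]
  push_cast
  rw [show (n + 1 + 1 : K) = n + 2 by ring]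
  field_simp
  ring

lemma jacobiCoeff_succ_self (n : ℕ) :
    (n + 1) * (n + α + β + 1) * jacobiCoeff α β (n + 1) (n + 1) =
      (2 * n + α + β + 1) * (2 * n + α + β + 2) * jacobiCoeff α β n n := by
  have hfac : (n.factorial : K) ≠ 0 := Nat.cast_ne_zero.mpr (Nat.factorial_ne_zero n)
  have hshift := mul_ascPochhammer_succ_eval_add_one n (n + α + β + 1)
  simp only [jacobiCoeff, Nat.choose_self, Nat.sub_self, ascPochhammer_zero, eval_one,
    Nat.factorial_succ]
  push_cast
  rw [show n + 1 + α + β + 1 = n + α + β + 1 + 1 by ring]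
  field_simp
  linear_combination hshift

-- The prefactors on the left cancel the denominators that a common factor would otherwise need;
-- the recurrence supplies exactly these prefactors.
lemma exists_common_factor_jacobiCoeff (k i : ℕ) : ∃ w : K,
    (k + i + α + β + 2) * jacobiCoeff α β (k + i + 2) (k + 1) =
      (k + i + α + 2) * (2 * k + i + α + β + 2) * (2 * k + i + α + β + 3) * w ∧
    jacobiCoeff α β (k + i + 1) (k + 1) = (i + 1) * (2 * k + i + α + β + 2) * w ∧
    jacobiCoeff α β (k + i + 1) k = (k + 1) * (k + α + 1) * w ∧
    (k + i + α + 1) * jacobiCoeff α β (k + i) (k + 1) =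
      i * (i + 1) * (k + i + α + β + 1) * w := by
  have hi : (i + 1 : K) ≠ 0 := Nat.cast_add_one_ne_zero i
  have hα : α + (k + 1 : ℕ) + 1 = α + k + 2 := by push_cast; ring
  refine ⟨(ascPochhammer K i).eval (α + k + 2) *
    (ascPochhammer K k).eval (k + i + α + β + 2) / ((k + 1).factorial * (i + 1).factorial),
    ?_, ?_, ?_, ?_⟩
  · have hshift := mul_ascPochhammer_succ_eval_add_one k (k + i + α + β + 2)
    rw [show k + i + 2 = (k + 1) + (i + 1) by ring, jacobiCoeff_add, hα,
      ascPochhammer_succ_eval i]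
    push_cast
    rw [show k + 1 + (i + 1) + α + β + 1 = k + i + α + β + 2 + 1 by ring]
    linear_combination (ascPochhammer K i).eval (α + k + 2) * (α + k + 2 + i) /
      ((k + 1).factorial * (i + 1).factorial) * hshift
  · rw [show k + i + 1 = (k + 1) + i by ring, jacobiCoeff_add, hα, ascPochhammer_succ_eval k,
      Nat.factorial_succ i]
    push_cast
    rw [show k + 1 + i + α + β + 1 = k + i + α + β + 2 by ring]
    field_simp
    ring
  · rw [show k + i + 1 = k + (i + 1) by ring, jacobiCoeff_add, ascPochhammer_succ_eval_left i,
      Nat.factorial_succ k]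
    push_cast
    rw [show α + k + 1 + 1 = α + k + 2 by ring,
      show k + (i + 1) + α + β + 1 = k + i + α + β + 2 by ring]
    field_simp
    ring
  · cases i with
    | zero => simp [jacobiCoeff_of_lt]
    | succ i =>
      rw [show k + (i + 1) = (k + 1) + i by ring, jacobiCoeff_add, hα,
        ascPochhammer_succ_eval_left k, ascPochhammer_succ_eval i, Nat.factorial_succ (i + 1),
        Nat.factorial_succ i]
      push_cast at hi ⊢
      rw [show k + 1 + i + α + β + 1 + 1 = k + (i + 1) + α + β + 2 by ring]
      field_simp
      ring

lemma jacobiCoeff_succ_recurrence (n k : ℕ) :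
    2 * (n + 2) * (n + α + β + 2) * (2 * n + α + β + 2) * jacobiCoeff α β (n + 2) (k + 1) =
      (2 * n + α + β + 3) * ((2 * n + α + β + 4) * (2 * n + α + β + 2) - (β ^ 2 - α ^ 2)) *
        jacobiCoeff α β (n + 1) (k + 1) +
      2 * (2 * n + α + β + 3) * (2 * n + α + β + 4) * (2 * n + α + β + 2) *
        jacobiCoeff α β (n + 1) k -
      2 * (n + 1 + α) * (n + 1 + β) * (2 * n + α + β + 4) * jacobiCoeff α β n (k + 1) := by
  rcases lt_trichotomy k (n + 1) with hk | rfl | hk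
  · obtain ⟨i, rfl⟩ := Nat.exists_eq_add_of_le (Nat.le_of_lt_succ hk)
    obtain ⟨w, h₂, h₁, h₁', h₀⟩ := exists_common_factor_jacobiCoeff α β k i
    rw [h₁, h₁']
    push_cast
    linear_combination 2 * (k + i + 2) * (2 * (k + i) + α + β + 2) * h₂ +
      2 * (k + i + 1 + β) * (2 * (k + i) + α + β + 4) * h₀
  · have hself := jacobiCoeff_succ_self α β (n + 1)
    rw [jacobiCoeff_of_lt α β (show n + 1 < n + 1 + 1 by lia),
      jacobiCoeff_of_lt α β (show n < n + 1 + 1 by lia)]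
    push_cast at hself
    linear_combination 2 * (2 * n + α + β + 2) * hself
  · rw [jacobiCoeff_of_lt α β (show n + 2 < k + 1 by lia),
      jacobiCoeff_of_lt α β (show n + 1 < k + 1 by lia),
      jacobiCoeff_of_lt α β hk, jacobiCoeff_of_lt α β (show n < k + 1 by lia)]
    ring

end JacobiCoeff

section ShiftedJacobi

variable {K : Type*} [Field K] (α β : K)

/-- The Jacobi polynomial re-centred at `1`: the polynomial `t ↦ P_n^{α,β}(1 + 2t)`. -/
noncomputable def shiftedJacobi (n : ℕ) : K[X] :=
  ∑ k ∈ range (n + 1), monomial k (jacobiCoeff α β n k)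

lemma coeff_shiftedJacobi (n k : ℕ) :
    (shiftedJacobi α β n).coeff k = jacobiCoeff α β n k := by
  simp only [shiftedJacobi, finsetSum_coeff, coeff_monomial, sum_ite_eq', mem_range]
  exact ite_eq_left_iff.mpr fun h => (jacobiCoeff_of_lt α β (by lia)).symm

lemma natDegree_shiftedJacobi_le (n : ℕ) : (shiftedJacobi α β n).natDegree ≤ n :=
  natDegree_le_iff_coeff_eq_zero.mpr fun k hk => by
    rw [coeff_shiftedJacobi, jacobiCoeff_of_lt α β hk]

variable [CharZero K]

lemma derivative_shiftedJacobi_succ (n : ℕ) :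
    derivative (shiftedJacobi α β (n + 1)) =
      C (n + α + β + 2) * shiftedJacobi (α + 1) (β + 1) n := by
  ext k
  rw [coeff_derivative, coeff_C_mul, coeff_shiftedJacobi, coeff_shiftedJacobi,
    jacobiCoeff_succ_succ_mul]

lemma shiftedJacobi_recurrence (n : ℕ) :
    C (2 * (n + 2) * (n + α + β + 2) * (2 * n + α + β + 2)) * shiftedJacobi α β (n + 2) =
      C ((2 * n + α + β + 3) * ((2 * n + α + β + 4) * (2 * n + α + β + 2) - (β ^ 2 - α ^ 2))) *
        shiftedJacobi α β (n + 1) +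
      C (2 * (2 * n + α + β + 3) * (2 * n + α + β + 4) * (2 * n + α + β + 2)) *
        (X * shiftedJacobi α β (n + 1)) -
      C (2 * (n + 1 + α) * (n + 1 + β) * (2 * n + α + β + 4)) * shiftedJacobi α β n := by
  ext k
  simp only [coeff_sub, coeff_add, coeff_C_mul, coeff_shiftedJacobi]
  cases k with
  | zero => rw [coeff_X_mul_zero, mul_zero, add_zero, jacobiCoeff_zero_recurrence]
  | succ k => rw [coeff_X_mul, coeff_shiftedJacobi, jacobiCoeff_succ_recurrence]

end ShiftedJacobi

section JacobiPolynomial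

lemma jacobiP_eq_eval_shiftedJacobi {α β : ℝ} (h : ∀ m : ℕ, α + β + 2 ≠ -m) (n : ℕ) (y : ℝ) :
    jacobiP α β n y = (shiftedJacobi α β n).eval ((y - 1) / 2) := by
  induction n using Nat.twoStepInduction with
  | zero => simp [jacobiP, shiftedJacobi, jacobiCoeff]
  | one =>
    have hcoeff₀ : jacobiCoeff α β 1 0 = α + 1 := by simp [jacobiCoeff]
    have hcoeff₁ : jacobiCoeff α β 1 1 = 1 + α + β + 1 := by simp [jacobiCoeff]
    rw [jacobiP, shiftedJacobi, sum_range_succ, sum_range_one, eval_add, eval_monomial,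
      eval_monomial, hcoeff₀, hcoeff₁]
    ring
  | more n ih₀ ih₁ =>
    have hn : (n : ℝ) + α + β + 2 ≠ 0 := fun h₀ => h n (by linear_combination h₀)
    have h2n : 2 * (n : ℝ) + α + β + 2 ≠ 0 := fun h₀ =>
      h (2 * n) (by push_cast; linear_combination h₀)
    have hrec := congrArg (eval ((y - 1) / 2)) (shiftedJacobi_recurrence α β n)
    simp only [eval_sub, eval_add, eval_mul, eval_C, eval_X] at hrec
    rw [jacobiP, ih₀, ih₁, show (n : ℝ) + 1 + 1 = n + 2 by ring,
      show (n : ℝ) + 1 + α + β + 1 = n + α + β + 2 by ring,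
      show 2 * ((n : ℝ) + 1) + α + β = 2 * n + α + β + 2 by ring]
    refine mul_left_cancel₀ (by positivity :
      2 * ((n : ℝ) + 2) * (n + α + β + 2) * (2 * n + α + β + 2) ≠ 0) ?_
    rw [hrec]
    field_simp
    ring

/-- The Jacobi polynomial `P_n^{α,β}` as an element of `ℝ[X]`. It is given by its explicit
expansion, so it agrees with the recursive `jacobiP` only where the denominators of the
recurrence do not vanish. -/
noncomputable def jacobiPolynomial (α β : ℝ) (n : ℕ) : ℝ[X] :=
  (shiftedJacobi α β n).comp (C (1 / 2) * (X - 1))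

lemma eval_jacobiPolynomial {α β : ℝ} (h : ∀ m : ℕ, α + β + 2 ≠ -m) (n : ℕ) (y : ℝ) :
    (jacobiPolynomial α β n).eval y = jacobiP α β n y := by
  rw [jacobiP_eq_eval_shiftedJacobi h, jacobiPolynomial, eval_comp]
  simp [div_eq_inv_mul]

lemma degree_jacobiPolynomial_lt (α β : ℝ) (n : ℕ) :
    (jacobiPolynomial α β n).degree < (n + 1 : ℕ) := by
  have hlin : (C (1 / 2) * (X - 1) : ℝ[X]).natDegree ≤ 1 :=
    (natDegree_C_mul_le _ _).trans (natDegree_X_sub_C_le 1)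
  have hcomp : (jacobiPolynomial α β n).natDegree ≤ n := by
    rw [jacobiPolynomial, natDegree_comp]
    exact (Nat.mul_le_mul (natDegree_shiftedJacobi_le α β n) hlin).trans_eq (mul_one n)
  exact (degree_le_of_natDegree_le hcomp).trans_lt (Nat.cast_lt.mpr n.lt_succ_self)

lemma derivative_jacobiPolynomial_succ (α β : ℝ) (n : ℕ) :
    derivative (jacobiPolynomial α β (n + 1)) =
      C ((n + α + β + 2) / 2) * jacobiPolynomial (α + 1) (β + 1) n := by
  have hlin : derivative (C (1 / 2) * (X - 1) : ℝ[X]) = C (1 / 2) := by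
    rw [derivative_C_mul, derivative_sub, derivative_X, derivative_one, sub_zero, mul_one]
  rw [jacobiPolynomial, derivative_comp, hlin, derivative_shiftedJacobi_succ, mul_comp, C_comp,
    ← jacobiPolynomial, ← mul_assoc, ← C_mul, one_div_mul_eq_div]

lemma eval_one_jacobiPolynomial {α : ℝ} (hα : ∀ m : ℕ, α + 1 ≠ -m) (β : ℝ) (n : ℕ) :
    (jacobiPolynomial α β n).eval 1 =
      Real.Gamma (α + n + 1) / (Real.Gamma (α + 1) * n.factorial) := by
  have hΓ : Real.Gamma (α + 1) ≠ 0 := Real.Gamma_ne_zero hα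
  have hcoeff : (jacobiPolynomial α β n).eval 1 = jacobiCoeff α β n 0 := by
    rw [← coeff_shiftedJacobi, coeff_zero_eq_eval_zero, jacobiPolynomial, eval_comp]
    simp
  rw [hcoeff, add_right_comm, Gamma_add_natCast_eq_ascPochhammer_mul hα]
  simp only [jacobiCoeff, Nat.choose_zero_right, Nat.cast_one, Nat.cast_zero, add_zero,
    Nat.sub_zero, one_mul, ascPochhammer_zero, eval_one, mul_one]
  field_simp

lemma eval_one_jacobiPolynomial_ne_zero {α : ℝ} (hα : ∀ m : ℕ, α + 1 ≠ -m) (β : ℝ) (n : ℕ) :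
    (jacobiPolynomial α β n).eval 1 ≠ 0 := by
  have hΓ : Real.Gamma (α + n + 1) ≠ 0 := Real.Gamma_ne_zero fun m h =>
    hα (n + m) (by push_cast; linear_combination h)
  rw [eval_one_jacobiPolynomial hα]
  exact div_ne_zero hΓ (mul_ne_zero (Real.Gamma_ne_zero hα) (by positivity))

end JacobiPolynomial

section LagrangeBasis

variable {F ι : Type*} [Field F] [DecidableEq ι] {s : Finset ι} {v : ι → F} {i j : ι}

lemma lagrangeBasis_eq_nodalWeight_mul (hi : i ∈ s) :
    Lagrange.basis s v i = C (Lagrange.nodalWeight s v i) * Lagrange.nodal (s.erase i) v := by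
  rw [Lagrange.basis_eq_prod_sub_inv_mul_nodal_div hi, Lagrange.nodal_erase_eq_nodal_div hi]

lemma eval_derivative_lagrangeBasis (hi : i ∈ s) (hj : j ∈ s) (hij : i ≠ j) :
    (derivative (Lagrange.basis s v i)).eval (v j) =
      (Lagrange.nodal ((s.erase i).erase j) v).eval (v j) /
        ((v i - v j) * (Lagrange.nodal ((s.erase i).erase j) v).eval (v i)) := by
  have hj' : j ∈ s.erase i := mem_erase.mpr ⟨hij.symm, hj⟩
  rw [lagrangeBasis_eq_nodalWeight_mul hi, derivative_C_mul, eval_C_mul,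
    Lagrange.eval_nodal_derivative_eval_node_eq hj',
    Lagrange.nodalWeight_eq_eval_nodal_erase_inv, Lagrange.nodal_eq_mul_nodal_erase hj',
    eval_mul, eval_sub, eval_X, eval_C, div_eq_inv_mul]

lemma eval_derivative_lagrangeBasis_mul_swap (hv : Set.InjOn v s) (hi : i ∈ s) (hj : j ∈ s)
    (hij : i ≠ j) :
    (derivative (Lagrange.basis s v i)).eval (v j) *
      (derivative (Lagrange.basis s v j)).eval (v i) = ((v i - v j) * (v j - v i))⁻¹ := by
  have hNi : (Lagrange.nodal ((s.erase i).erase j) v).eval (v i) ≠ 0 :=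
    Lagrange.eval_nodal_not_at_node fun k hk => hv.ne hi (by grind) (by grind)
  have hNj : (Lagrange.nodal ((s.erase i).erase j) v).eval (v j) ≠ 0 :=
    Lagrange.eval_nodal_not_at_node fun k hk => hv.ne hj (by grind) (by grind)
  rw [eval_derivative_lagrangeBasis hi hj hij, eval_derivative_lagrangeBasis hj hi hij.symm,
    erase_right_comm (a := j)]
  field_simp

lemma eq_C_mul_lagrangeBasis_of_forall_root {p : F[X]} (hv : Set.InjOn v s) (hp : p.degree < #s)
    (hi : i ∈ s) (hroots : ∀ k ∈ s, k ≠ i → p.eval (v k) = 0) :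
    p = C (p.eval (v i)) * Lagrange.basis s v i := by
  conv_lhs => rw [Lagrange.eq_interpolate hv hp, Lagrange.interpolate_apply]
  exact sum_eq_single_of_mem i hi fun k hk hki => by rw [hroots k hk hki, C_0, zero_mul]

lemma eval_derivative_lagrangeBasis_of_forall_root {p : F[X]} (hv : Set.InjOn v s)
    (hp : p.degree < #s) (hi : i ∈ s) (hj : j ∈ s) (hij : i ≠ j)
    (hroots : ∀ k ∈ s, k ≠ i → p.eval (v k) = 0) (hpi : p.eval (v i) ≠ 0) :
    (derivative (Lagrange.basis s v j)).eval (v i) =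
      p.eval (v i) / ((derivative p).eval (v j) * (v i - v j) * (v j - v i)) := by
  have hsub : v i - v j ≠ 0 := sub_ne_zero.mpr (hv.ne hi hj hij)
  have hsub' : v j - v i ≠ 0 := sub_ne_zero.mpr (hv.ne hj hi hij.symm)
  have hswap := eval_derivative_lagrangeBasis_mul_swap hv hi hj hij
  have hne : (derivative (Lagrange.basis s v i)).eval (v j) ≠ 0 :=
    left_ne_zero_of_mul (hswap ▸ inv_ne_zero (mul_ne_zero hsub hsub'))
  have hderiv : (derivative p).eval (v j) =
      p.eval (v i) * (derivative (Lagrange.basis s v i)).eval (v j) := by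
    conv_lhs => rw [eq_C_mul_lagrangeBasis_of_forall_root hv hp hi hroots, derivative_C_mul,
      eval_C_mul]
  rw [hderiv, eq_div_iff (by positivity)]
  field_simp at hswap
  linear_combination p.eval (v i) * hswap

end LagrangeBasis

section GeneralizedLagrange

variable {u : ℝ → ℝ} {n : ℕ} {x : Fin (n + 1) → ℝ} {j : Fin (n + 1)}

lemma deriv_glW {t : ℝ} (ht : DifferentiableAt ℝ u t) :
    deriv (glW u x) t = (derivative (Lagrange.nodal univ (u ∘ x))).eval (u t) * deriv u t := by
  have hglW : glW u x = fun t => (Lagrange.nodal univ (u ∘ x)).eval (u t) :=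
    funext fun _ => Lagrange.eval_nodal.symm
  rw [hglW]
  exact ((Polynomial.hasDerivAt _ _).comp _ ht.hasDerivAt).deriv

lemma glL_eq_eval_lagrangeBasis (hj : deriv u (x j) ≠ 0) (t : ℝ) :
    glL u x j t = (Lagrange.basis univ (u ∘ x) j).eval (u t) := by
  rw [lagrangeBasis_eq_nodalWeight_mul (mem_univ j), eval_C_mul, Lagrange.eval_nodal,
    Lagrange.nodalWeight_eq_eval_derivative_nodal (mem_univ j), glL,
    deriv_glW (differentiableAt_of_deriv_ne_zero hj), div_mul_cancel_right₀ hj]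
  rfl

lemma deriv_glL (hj : deriv u (x j) ≠ 0) {t : ℝ} (ht : DifferentiableAt ℝ u t) :
    deriv (glL u x j) t =
      (derivative (Lagrange.basis univ (u ∘ x) j)).eval (u t) * deriv u t := by
  rw [funext (glL_eq_eval_lagrangeBasis hj)]
  exact ((Polynomial.hasDerivAt _ _).comp _ ht.hasDerivAt).deriv

lemma deriv_glL_of_forall_root {p : ℝ[X]} {k : Fin (n + 1)} (hux : Function.Injective (u ∘ x))
    (hp : p.degree < (n + 1 : ℕ)) (hroots : ∀ i ≠ k, p.eval (u (x i)) = 0)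
    (hpk : p.eval (u (x k)) ≠ 0) (hkj : k ≠ j) (hj : deriv u (x j) ≠ 0)
    (hk : DifferentiableAt ℝ u (x k)) :
    deriv (glL u x j) (x k) = p.eval (u (x k)) / ((derivative p).eval (u (x j)) *
      (u (x k) - u (x j)) * (u (x j) - u (x k))) * deriv u (x k) := by
  have hbasis := eval_derivative_lagrangeBasis_of_forall_root (v := u ∘ x) hux.injOn
    (by rwa [card_univ, Fintype.card_fin]) (mem_univ k) (mem_univ j) hkj
    (fun i _ => hroots i) hpk
  rw [deriv_glL hj hk]
  exact congrArg (· * deriv u (x k)) hbasis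

end GeneralizedLagrange

theorem gl_jacobi_radau_last_row_general (α β : ℝ) (hα : ∀ m : ℕ, α + 1 ≠ -m)
    (hαβ : ∀ m : ℕ, α + β + 3 ≠ -m) (n : ℕ) (u : ℝ → ℝ) (x : Fin (n + 1) → ℝ)
    (hux : Function.Injective (u ∘ x))
    (hroots : ∀ i : Fin (n + 1), (i : ℕ) < n → jacobiP α (β + 1) n (u (x i)) = 0)
    (hlast : u (x (Fin.last n)) = 1) (hu : DifferentiableAt ℝ u (x (Fin.last n)))
    (j : Fin (n + 1)) (hj : (j : ℕ) < n) (hu' : deriv u (x j) ≠ 0) :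
    deriv (glL u x j) (x (Fin.last n)) =
      2 * deriv u (x (Fin.last n)) * Real.Gamma (α + (n : ℝ) + 1) /
        (Real.Gamma (α + 1) * (n.factorial : ℝ) * (α + β + (n : ℝ) + 2) *
          jacobiP (α + 1) (β + 2) (n - 1) (u (x j)) *
          (u (x (Fin.last n)) - u (x j)) * (u (x j) - u (x (Fin.last n)))) := by
  obtain ⟨n, rfl⟩ := Nat.exists_eq_succ_of_ne_zero (Nat.ne_zero_of_lt hj)
  set G := jacobiPolynomial α (β + 1) (n + 1)
  have hGroots (i : Fin (n + 2)) (hi : i ≠ Fin.last (n + 1)) : G.eval (u (x i)) = 0 := by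
    rw [eval_jacobiPolynomial fun m h => hαβ m (by linear_combination h)]
    exact hroots i (Fin.val_lt_last hi)
  have hGderiv : (derivative G).eval (u (x j)) =
      (α + β + (n + 1 : ℕ) + 2) / 2 * jacobiP (α + 1) (β + 2) n (u (x j)) := by
    rw [derivative_jacobiPolynomial_succ, eval_C_mul, add_assoc β, one_add_one_eq_two,
      eval_jacobiPolynomial fun m h => hαβ (m + 2) (by push_cast; linear_combination h)]
    push_cast
    ring
  have hGone : G.eval (u (x (Fin.last (n + 1)))) ≠ 0 := by
    rw [hlast]
    exact eval_one_jacobiPolynomial_ne_zero hα _ _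
  rw [deriv_glL_of_forall_root hux (degree_jacobiPolynomial_lt ..) hGroots hGone
    (Fin.ne_of_gt hj) hu' hu, hlast, eval_one_jacobiPolynomial hα, hGderiv]
  simp only [Nat.succ_eq_add_one, Nat.add_sub_cancel]
  field_simp

theorem gl_jacobi_radau_last_row (α β : ℝ) (hα : -1 < α) (hβ : -1 < β)
    (n : ℕ) (hn : 1 ≤ n) (u : ℝ → ℝ) (x : Fin (n + 1) → ℝ)
    (hu : Differentiable ℝ u)
    (hx : Function.Injective x)
    (hux : Function.Injective (u ∘ x))
    (hu' : ∀ i, deriv u (x i) ≠ 0)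
    (hroots : ∀ i : Fin (n + 1), (i : ℕ) < n → jacobiP α (β + 1) n (u (x i)) = 0)
    (hlast : u (x (Fin.last n)) = 1)
    (j : Fin (n + 1)) (hj : (j : ℕ) < n) :
    deriv (glL u x j) (x (Fin.last n)) =
      2 * deriv u (x (Fin.last n)) * Real.Gamma (α + (n : ℝ) + 1) /
        (Real.Gamma (α + 1) * (n.factorial : ℝ) * (α + β + (n : ℝ) + 2) *
          jacobiP (α + 1) (β + 2) (n - 1) (u (x j)) *
          (u (x (Fin.last n)) - u (x j)) * (u (x j) - u (x (Fin.last n)))) := by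
  exact gl_jacobi_radau_last_row_general α β (ne_neg_natCast_of_pos (by linarith))
    (ne_neg_natCast_of_pos (by linarith)) n u x hux hroots hlast (hu _) j hj (hu' j)
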